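/- Let q be a prime power, K the field with q² elements with Frobenius automorphism σ(a) = a^q, B ∈ M_n(K) an invertible hermitian matrix, 𝒞(B) = {g ∈ M_n(K) : g invertible, g·B·g* = B} the corresponding unitary group, and let x ∈ 𝒞(B) with det x = 1. For m ≥ 1, say that x has an elementary divisor of exponent m if there exists a monic irreducible f ∈ K[t] with 2·dim ker(f(x)^m) > dim ker(f(x)^{m+1}) + dim ker(f(x)^{m−1}). Let r = gcd(q+1, gcd{m ≥ 1 : x has an elementary divisor of exponent m}). Then (q+1) · |{y ∈ 𝒞(B) : x·y = y·x and det y = 1}| = r · |{y ∈ 𝒞(B) : x·y = y·x}|. (Equivalently, the 𝒞(B)-conjugacy class of x splits into exactly r distinct conjugacy classes of the special unitary group {g ∈ 𝒞(B) : det g = 1}.) -/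

import Mathlib

open Matrix

/-- For a matrix over the field `K` with `q²` elements, `X* = (σX)ᵀ` where `σ(a) = a^q`
is the Frobenius automorphism. -/
def hermStar {K : Type*} [Field K] {n : ℕ} (q : ℕ) (X : Matrix (Fin n) (Fin n) K) :
    Matrix (Fin n) (Fin n) K :=
  (X.map fun a => a ^ q)ᵀ

/-- `x` has an elementary divisor of exponent `m`: there is a monic irreducible `f` with
`2·dim ker(f(x)^m) > dim ker(f(x)^{m+1}) + dim ker(f(x)^{m−1})`. -/
def HasEDOfExponent {K : Type*} [Field K] {n : ℕ}
    (x : Matrix (Fin n) (Fin n) K) (m : ℕ) : Prop :=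
  ∃ f : Polynomial K, f.Monic ∧ Irreducible f ∧
    Module.finrank K (LinearMap.ker (Matrix.toLin' ((Polynomial.aeval x f) ^ (m + 1)))) +
      Module.finrank K (LinearMap.ker (Matrix.toLin' ((Polynomial.aeval x f) ^ (m - 1)))) <
    2 * Module.finrank K (LinearMap.ker (Matrix.toLin' ((Polynomial.aeval x f) ^ m)))

/-!
The determinant maps the unitary centralizer of `x` onto a subgroup `D` of the cyclic group of
norm-one elements of `K`, which has order `q + 1`, and the claim is that `D` has index `r`.

*`D` consists of `r`-th powers.* Over an algebraic closure, each generalized eigenspace `W` of a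
centralizing `y` is a direct summand stable under `x`, so the Jordan blocks of `x` on `W` are among
those of `x` and `r` divides `dim W`. Hence `y.charpoly = g ^ r`, and `y⁻¹ ~ yᴴ` makes the constant
coefficient of `g`, which up to sign is an `r`-th root of `y.det`, an element of norm one.

*`D` is large.* If `f ^ m` is an elementary divisor of `x`, then `x` has a cyclic direct summand
isomorphic to `K[X] / (f ^ m)`, whose projection `E` can be chosen to commute with its adjoint `E†`:
either `f` is coprime to its conjugate reciprocal, and then `E E† = E† E = 0`, or `f` divides it,
and then a suitable generator, chosen so that its pairing with itself is nondegenerate, gives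
`E = E†`. For `A = 1 + (a(x) - 1) E` the matrix `A (A†)⁻¹` is unitary, commutes with `x`, and has
determinant `b ^ m / σ(b ^ m)`, where `b` is the norm of `a` modulo `f`. Since every `b` is such a
norm, `D` contains every `m`-th power of a norm-one element.
-/

section NilpotentBlocks
open Module Polynomial

variable {K V : Type*} [Field K] [AddCommGroup V] [Module K V]

/-- `N` has a nilpotent Jordan block of size `j + 1`. For `N = f(T)` with `f` irreducible, this says
that `f ^ (j + 1)` is an elementary divisor of `T`. -/
def HasNilpotentBlock (N : Module.End K V) (j : ℕ) : Prop :=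
  ∃ u, (N ^ (j + 1)) u = 0 ∧ (N ^ j) u ∉ LinearMap.range (N ^ (j + 1))

theorem HasNilpotentBlock.of_restrict {N : Module.End K V} {p q : Submodule K V}
    (hpq : IsCompl p q) (hp : ∀ v ∈ p, N v ∈ p) (hq : ∀ v ∈ q, N v ∈ q) {j : ℕ}
    (h : HasNilpotentBlock (N.restrict hp) j) : HasNilpotentBlock N j := by
  obtain ⟨u, hu, hu'⟩ := h
  rw [Module.End.pow_restrict] at hu
  rw [Module.End.pow_restrict, Module.End.pow_restrict] at hu'
  refine ⟨u, congrArg Subtype.val hu, fun ⟨c, hc⟩ => hu' ?_⟩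
  obtain ⟨a, b, ha, hb, rfl⟩ := Submodule.codisjoint_iff_exists_add_eq.mp hpq.codisjoint c
  have hNb : (N ^ (j + 1)) b = (N ^ j) u - (N ^ (j + 1)) a := by
    rw [← hc, map_add, add_sub_cancel_left]
  have hNb0 : (N ^ (j + 1)) b = 0 := by
    refine Submodule.disjoint_def.mp hpq.disjoint _ ?_
      (Module.End.pow_apply_mem_of_forall_mem _ hq b hb)
    rw [hNb]
    exact p.sub_mem (Module.End.pow_apply_mem_of_forall_mem _ hp u u.2)
      (Module.End.pow_apply_mem_of_forall_mem _ hp a ha)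
  exact ⟨⟨a, ha⟩, Subtype.ext (sub_eq_zero.mp (hNb.symm.trans hNb0)).symm⟩

theorem HasNilpotentBlock.aeval_mul {T : Module.End K V} {f g : K[X]} (hfg : IsCoprime f g) {j : ℕ}
    (h : HasNilpotentBlock (aeval T f) j) : HasNilpotentBlock (aeval T (f * g)) j := by
  obtain ⟨u, hu, hu'⟩ := h
  simp only [← map_pow] at hu hu'
  simp only [HasNilpotentBlock, ← map_pow]
  refine ⟨u, ?_, fun ⟨t, ht⟩ => hu' ?_⟩
  · rw [mul_pow, mul_comm, map_mul, Module.End.mul_apply, hu, map_zero]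
  obtain ⟨a, b, hab⟩ := hfg.pow_right (n := j)
  have hfj : f ^ j = a * f ^ (j + 1) + b * (f * g) ^ j := by
    linear_combination -f ^ j * hab
  refine ⟨aeval T (b * g ^ (j + 1)) t, ?_⟩
  calc aeval T (f ^ (j + 1)) (aeval T (b * g ^ (j + 1)) t)
      = aeval T (b * (f * g) ^ (j + 1)) t := by
        rw [← Module.End.mul_apply, ← map_mul]
        congr 2
        ring
    _ = aeval T a (aeval T (f ^ (j + 1)) u) + aeval T b (aeval T ((f * g) ^ j) u) := by
        rw [hu, map_zero, zero_add, ← ht, map_mul, Module.End.mul_apply]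
    _ = aeval T (f ^ j) u := by
        rw [← Module.End.mul_apply, ← Module.End.mul_apply, ← map_mul, ← map_mul,
          ← LinearMap.add_apply, ← map_add, ← hfj]

theorem hasNilpotentBlock_iff_not_le {N : Module.End K V} {j : ℕ} :
    HasNilpotentBlock N j ↔ ¬ LinearMap.ker N ⊓ LinearMap.range (N ^ j) ≤
      LinearMap.ker N ⊓ LinearMap.range (N ^ (j + 1)) := by
  rw [le_inf_iff, not_and, SetLike.not_le_iff_exists]
  constructor
  · rintro ⟨u, hu, hu'⟩ -
    exact ⟨_, ⟨by rwa [pow_succ', Module.End.mul_apply] at hu, u, rfl⟩, hu'⟩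
  · intro h
    obtain ⟨_, ⟨hu, u, rfl⟩, hu'⟩ := h inf_le_left
    exact ⟨u, by rwa [pow_succ', Module.End.mul_apply], hu'⟩

theorem ker_inf_range_pow_succ_le (N : Module.End K V) (j : ℕ) :
    LinearMap.ker N ⊓ LinearMap.range (N ^ (j + 1)) ≤ LinearMap.ker N ⊓ LinearMap.range (N ^ j) :=
  inf_le_inf_left _ (pow_succ N j ▸ LinearMap.range_comp_le_range _ _)

variable [FiniteDimensional K V]

theorem finrank_ker_pow_succ (N : Module.End K V) (j : ℕ) :
    finrank K (LinearMap.ker (N ^ (j + 1))) =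
      finrank K (LinearMap.ker (N ^ j)) +
        finrank K ↥(LinearMap.ker N ⊓ LinearMap.range (N ^ j)) := by
  have hle : LinearMap.ker (N ^ j) ≤ LinearMap.ker (N ^ (j + 1)) :=
    pow_succ' N j ▸ LinearMap.ker_le_ker_comp _ _
  have hrange : (LinearMap.ker (N ^ (j + 1))).map (N ^ j) =
      LinearMap.ker N ⊓ LinearMap.range (N ^ j) := by
    rw [pow_succ', Module.End.mul_eq_comp, LinearMap.ker_comp, Submodule.map_comap_eq, inf_comm]
  have := LinearMap.finrank_range_add_finrank_ker
    ((N ^ j).domRestrict (LinearMap.ker (N ^ (j + 1))))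
  rw [LinearMap.range_domRestrict, LinearMap.ker_domRestrict,
    (Submodule.comapSubtypeEquivOfLe hle).finrank_eq, hrange] at this
  lia

theorem finrank_ker_inf_range_pow_succ_le (N : Module.End K V) (j : ℕ) :
    finrank K ↥(LinearMap.ker N ⊓ LinearMap.range (N ^ (j + 1))) ≤
      finrank K ↥(LinearMap.ker N ⊓ LinearMap.range (N ^ j)) :=
  Submodule.finrank_mono (ker_inf_range_pow_succ_le N j)

theorem hasNilpotentBlock_iff_finrank_inf_lt {N : Module.End K V} {j : ℕ} :
    HasNilpotentBlock N j ↔ finrank K ↥(LinearMap.ker N ⊓ LinearMap.range (N ^ (j + 1))) <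
      finrank K ↥(LinearMap.ker N ⊓ LinearMap.range (N ^ j)) := by
  rw [hasNilpotentBlock_iff_not_le]
  exact ⟨fun h => Submodule.finrank_lt_finrank_of_lt
      (lt_of_le_not_ge (ker_inf_range_pow_succ_le N j) h),
    fun h h' => h.not_ge (Submodule.finrank_mono h')⟩

theorem hasNilpotentBlock_iff_finrank_lt {N : Module.End K V} {j : ℕ} :
    HasNilpotentBlock N j ↔
      finrank K (LinearMap.ker (N ^ (j + 2))) + finrank K (LinearMap.ker (N ^ j)) <
        2 * finrank K (LinearMap.ker (N ^ (j + 1))) := by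
  rw [hasNilpotentBlock_iff_finrank_inf_lt, finrank_ker_pow_succ N (j + 1),
    finrank_ker_pow_succ N j]
  lia

theorem dvd_finrank_ker_pow_of_ker_pow_succ_eq {N : Module.End K V} {r k : ℕ}
    (hr : ∀ j, HasNilpotentBlock N j → r ∣ j + 1)
    (hk : LinearMap.ker (N ^ (k + 1)) = LinearMap.ker (N ^ k)) :
    r ∣ finrank K (LinearMap.ker (N ^ k)) := by
  let d (j : ℕ) := finrank K (LinearMap.ker (N ^ j))
  let w (j : ℕ) := finrank K ↥(LinearMap.ker N ⊓ LinearMap.range (N ^ j))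
  have hd (j : ℕ) : d (j + 1) = d j + w j := finrank_ker_pow_succ N j
  have hdvd (j : ℕ) : (r : ℤ) ∣ d j - j * w j := by
    induction j with
    | zero =>
      have hd0 : d 0 = 0 := Submodule.finrank_eq_zero.mpr LinearMap.ker_id
      simp [hd0]
    | succ j ih =>
      have hdrop : (r : ℤ) ∣ (j + 1) * (w j - w (j + 1)) := by
        by_cases hj : HasNilpotentBlock N j
        · exact (Int.natCast_dvd_natCast.mpr (hr j hj)).trans ⟨_, by push_cast; rfl⟩
        · rw [hasNilpotentBlock_iff_finrank_inf_lt, not_lt] at hj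
          simp [show w (j + 1) = w j from (finrank_ker_inf_range_pow_succ_le N j).antisymm hj]
      have hsplit : (d (j + 1) - (j + 1 : ℕ) * w (j + 1) : ℤ) =
          d j - j * w j + (j + 1) * (w j - w (j + 1)) := by
        rw [hd]
        push_cast
        ring
      exact hsplit ▸ dvd_add ih hdrop
  have hw : w k = 0 := by
    have hdk := finrank_ker_pow_succ N k
    rwa [hk, left_eq_add] at hdk
  simpa [hw, Int.natCast_dvd_natCast] using hdvd k

theorem dvd_rootMultiplicity_charpoly {T : Module.End K V} {μ : K} {r : ℕ}
    (hr : ∀ j, HasNilpotentBlock (aeval T (X - C μ)) j → r ∣ j + 1) :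
    r ∣ T.charpoly.rootMultiplicity μ := by
  have hT : aeval T (X - C μ) = T - μ • 1 := by simp [Algebra.algebraMap_eq_smul_one]
  rw [hT] at hr
  rw [← LinearMap.finrank_maxGenEigenspace_eq, Module.End.maxGenEigenspace_eq_genEigenspace_finrank,
    Module.End.genEigenspace_nat]
  refine dvd_finrank_ker_pow_of_ker_pow_succ_eq hr ?_
  rw [← Module.End.genEigenspace_nat, ← Module.End.genEigenspace_nat]
  exact Module.End.genEigenspace_eq_genEigenspace_finrank_of_le T μ (Nat.le_succ _)

variable [IsAlgClosed K] {S : Module.End K V} {r : ℕ}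

theorem dvd_finrank_of_isCompl
    (hr : ∀ (μ : K) j, HasNilpotentBlock (aeval S (X - C μ)) j → r ∣ j + 1)
    {p q : Submodule K V} (hpq : IsCompl p q) (hp : ∀ v ∈ p, S v ∈ p) (hq : ∀ v ∈ q, S v ∈ q) :
    r ∣ finrank K p := by
  classical
  rw [← LinearMap.charpoly_natDegree (S.restrict hp),
    ← splits_iff_card_roots.mp (IsAlgClosed.splits _), ← Multiset.toFinset_sum_count_eq]
  refine Finset.dvd_sum fun μ _ => ?_
  rw [count_roots]
  refine dvd_rootMultiplicity_charpoly fun j hj => hr μ j ?_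
  have hp' : ∀ v ∈ p, aeval S (X - C μ) v ∈ p := fun v hv => by
    simpa using p.sub_mem (hp v hv) (p.smul_mem μ hv)
  have hq' : ∀ v ∈ q, aeval S (X - C μ) v ∈ q := fun v hv => by
    simpa using q.sub_mem (hq v hv) (q.smul_mem μ hv)
  have hrestrict : aeval (S.restrict hp) (X - C μ) = (aeval S (X - C μ)).restrict hp' := by
    ext v
    simp
  exact (hrestrict ▸ hj).of_restrict hpq hp' hq'

theorem dvd_rootMultiplicity_charpoly_of_commute
    (hr : ∀ (μ : K) j, HasNilpotentBlock (aeval S (X - C μ)) j → r ∣ j + 1)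
    {T : Module.End K V} (hST : Commute S T) (ν : K) : r ∣ T.charpoly.rootMultiplicity ν := by
  have hcomm (k : ℕ) : Commute S ((T - ν • 1) ^ k) :=
    (hST.sub_right ((Commute.one_right S).smul_right ν)).pow_right k
  have hcompl := LinearMap.isCompl_iSup_ker_pow_iInf_range_pow (T - ν • 1)
  simp_rw [← Module.End.genEigenspace_nat, Module.End.iSup_genEigenspace_eq] at hcompl
  rw [← LinearMap.finrank_maxGenEigenspace_eq]
  refine dvd_finrank_of_isCompl hr hcompl
    (Module.End.mapsTo_maxGenEigenspace_of_comm hST.symm ν) fun v hv => ?_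
  rw [Submodule.mem_iInf] at hv ⊢
  intro k
  obtain ⟨w, rfl⟩ := hv k
  exact ⟨S w, (LinearMap.congr_fun (hcomm k) w).symm⟩

end NilpotentBlocks

section BaseChange
open Module Polynomial

variable {K L : Type*} [Field K] [Field L] {n : Type*} [Fintype n]

theorem rank_map_ringHom (φ : K →+* L) (A : Matrix n n K) : (A.map φ).rank = A.rank := by
  classical
  obtain ⟨V, U, e, hV, hU, hVAU⟩ := A.exists_rank_normal_form
  have hmap : V.map φ * A.map φ * U.map φ =
      (fromBlocks (1 : Matrix (Fin A.rank) (Fin A.rank) L) 0 0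
        (0 : Matrix (Fin (Fintype.card n - A.rank)) _ L)).submatrix e e := by
    rw [← Matrix.map_mul, ← Matrix.map_mul, hVAU, ← submatrix_map, fromBlocks_map]
    simp
  have hdet {U : Matrix n n K} (hU : IsUnit U) : IsUnit (U.map φ).det :=
    (isUnit_iff_isUnit_det _).mp (hU.map φ.mapMatrix)
  have hrank := congrArg rank hmap
  rw [rank_mul_eq_left_of_isUnit_det _ _ (hdet hU), rank_mul_eq_right_of_isUnit_det _ _ (hdet hV),
    rank_submatrix] at hrank
  rw [hrank, ← diagonal_one, ← diagonal_zero, fromBlocks_diagonal, rank_diagonal,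
    Fintype.card_subtype, Finset.card_filter, Fintype.sum_sum_type]
  simp

variable [DecidableEq n]

theorem finrank_ker_toLin'_map (φ : K →+* L) (A : Matrix n n K) :
    finrank L (LinearMap.ker (toLin' (A.map φ))) = finrank K (LinearMap.ker (toLin' A)) := by
  have h₁ := LinearMap.finrank_range_add_finrank_ker (toLin' A)
  have h₂ := LinearMap.finrank_range_add_finrank_ker (toLin' (A.map φ))
  have h₃ : finrank L (LinearMap.range (toLin' (A.map φ))) =
    finrank K (LinearMap.range (toLin' A)) := rank_map_ringHom φ A
  rw [finrank_fintype_fun_eq_card] at h₁ h₂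
  lia

theorem hasNilpotentBlock_toLin'_map_iff (φ : K →+* L) {A : Matrix n n K} {j : ℕ} :
    HasNilpotentBlock (toLin' (A.map φ)) j ↔ HasNilpotentBlock (toLin' A) j := by
  rw [hasNilpotentBlock_iff_finrank_lt, hasNilpotentBlock_iff_finrank_lt]
  iterate 6 rw [← toLin'_pow]
  iterate 3 rw [← Matrix.map_pow, finrank_ker_toLin'_map]

theorem aeval_toLin' (A : Matrix n n K) (f : K[X]) : aeval (toLin' A) f = toLin' (aeval A f) :=
  aeval_algHom_apply (toLinAlgEquiv' : Matrix n n K ≃ₐ[K] _).toAlgHom A f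

theorem hasNilpotentBlock_aeval_minpoly [PerfectField K] [Algebra K L] [Algebra.IsIntegral K L]
    {x : Matrix n n K} {μ : L} {j : ℕ}
    (h : HasNilpotentBlock (aeval (toLin' (x.map (algebraMap K L))) (X - C μ)) j) :
    HasNilpotentBlock (toLin' (aeval x (minpoly K μ))) j := by
  obtain ⟨g, hg⟩ : X - C μ ∣ (minpoly K μ).map (algebraMap K L) := by
    rw [dvd_iff_isRoot, IsRoot, eval_map_algebraMap, minpoly.aeval]
  have hsep : ((minpoly K μ).map (algebraMap K L)).Separable :=
    (PerfectField.separable_of_irreducible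
      (minpoly.irreducible (Algebra.IsIntegral.isIntegral μ))).map
  have hmul := h.aeval_mul (hg ▸ hsep).isCoprime
  have hmap : aeval (x.map (algebraMap K L)) (minpoly K μ) =
      (aeval x (minpoly K μ)).map (algebraMap K L) :=
    aeval_algHom_apply ((Algebra.ofId K L).mapMatrix (m := n)) x _
  rwa [← hg, aeval_toLin', aeval_map_algebraMap, hmap, hasNilpotentBlock_toLin'_map_iff] at hmul

end BaseChange

section DetOfCentralizer
open Module Polynomial

variable {L : Type*} [Field L] {n : Type*} [Fintype n] [DecidableEq n]

theorem exists_monic_pow_eq {p : L[X]} (hp : p.Monic) (hsplits : p.Splits) {r : ℕ}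
    (hr : ∀ μ, r ∣ p.rootMultiplicity μ) : ∃ g : L[X], g.Monic ∧ g ^ r = p := by
  classical
  obtain ⟨s, hs⟩ := Multiset.exists_smul_of_dvd_count p.roots (k := r)
    fun a _ => by rw [count_roots]; exact hr a
  refine ⟨(s.map fun a => X - C a).prod, monic_multiset_prod_of_monic _ _ fun a _ =>
    monic_X_sub_C a, ?_⟩
  rw [hsplits.eq_prod_roots_of_monic hp, hs, Multiset.map_nsmul, Multiset.prod_nsmul]

theorem associated_map_reverse_of_charpoly_inv {φ : L →+* L} {A : Matrix n n L} (hA : IsUnit A)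
    (hφ : A⁻¹.charpoly = A.charpoly.map φ) {g : L[X]} {r : ℕ} (hr : r ≠ 0)
    (hg : g ^ r = A.charpoly) : Associated (g.map φ) g.reverse := by
  have hreverse (k : ℕ) : (g ^ k).reverse = g.reverse ^ k := by
    induction k with
    | zero => rw [pow_zero, pow_zero, ← C_1, reverse_C]
    | succ k ih => rw [pow_succ, pow_succ, reverse_mul_of_domain, ih]
  rw [← Associated.pow_iff hr, ← Polynomial.map_pow, ← hreverse, hg, ← hφ, charpoly_inv A hA,
    reverse_charpoly]
  refine associated_unit_mul_left _ _ ((isUnit_one.neg.pow _).mul (isUnit_C.mpr ?_))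
  rw [isUnit_ringInverse]
  exact (isUnit_iff_isUnit_det A).mp hA

theorem map_coeff_zero_mul_coeff_zero {φ : L →+* L} {g : L[X]} (hg : g.Monic)
    (hg0 : g.coeff 0 ≠ 0) (h : Associated (g.map φ) g.reverse) :
    φ (g.coeff 0) * g.coeff 0 = 1 := by
  obtain ⟨u, hu⟩ := h
  obtain ⟨c, -, hc⟩ := Polynomial.isUnit_iff.mp u.isUnit
  have hlead : c = g.coeff 0 := by
    simpa [← hc, (hg.map φ).leadingCoeff, reverse_leadingCoeff, trailingCoeff_eq_coeff_zero hg0]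
      using congrArg leadingCoeff hu
  have hzero : φ (g.coeff 0) * c = 1 := by
    simpa [← hc, hg.leadingCoeff] using congrArg (coeff · 0) hu
  rwa [← hlead] at hzero ⊢

theorem exists_pow_eq_det {φ : L →+* L} {A : Matrix n n L} (hA : IsUnit A)
    (hsplits : A.charpoly.Splits) (hφ : A⁻¹.charpoly = A.charpoly.map φ) {r : ℕ} (hr : r ≠ 0)
    (hdvd : ∀ μ, r ∣ A.charpoly.rootMultiplicity μ) : ∃ δ : L, δ ^ r = A.det ∧ φ δ * δ = 1 := by
  obtain ⟨g, hgm, hg⟩ := exists_monic_pow_eq A.charpoly_monic hsplits hdvd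
  have hdet : ((-1) ^ g.natDegree * g.coeff 0) ^ r = A.det := by
    rw [det_eq_sign_charpoly_coeff, ← A.charpoly_natDegree_eq_dim, ← hg, hgm.natDegree_pow,
      mul_pow, ← pow_mul', coeff_zero_eq_eval_zero, coeff_zero_eq_eval_zero, eval_pow]
  have hg0 : g.coeff 0 ≠ 0 := fun h => ((isUnit_iff_isUnit_det A).mp hA).ne_zero
    (by rw [← hdet, h, mul_zero, zero_pow hr])
  refine ⟨_, hdet, ?_⟩
  have hnorm := map_coeff_zero_mul_coeff_zero hgm hg0
    (associated_map_reverse_of_charpoly_inv hA hφ hr hg)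
  rw [map_mul, map_pow, map_neg, map_one, mul_mul_mul_comm, hnorm, ← mul_pow]
  simp

variable {K : Type*} [Field K] [StarRing K]

theorem isUnit_of_mul_mul_conjTranspose_eq {B y : Matrix n n K} (hB : IsUnit B)
    (hy : y * B * yᴴ = B) : IsUnit y := by
  rw [isUnit_iff_isUnit_det] at hB ⊢
  rw [← hy, det_mul, det_mul] at hB
  exact isUnit_of_mul_isUnit_left (isUnit_of_mul_isUnit_left hB)

theorem charpoly_inv_of_mul_mul_conjTranspose_eq {B y : Matrix n n K} (hB : IsUnit B)
    (hy : y * B * yᴴ = B) : y⁻¹.charpoly = y.charpoly.map (starRingEnd K) := by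
  have hBdet := (isUnit_iff_isUnit_det B).mp hB
  have hinv : y⁻¹ = B * (yᴴ * B⁻¹) := by
    refine inv_eq_right_inv ?_
    rw [← mul_assoc, ← mul_assoc, hy, mul_nonsing_inv _ hBdet]
  rw [hinv, charpoly_mul_comm, mul_assoc, nonsing_inv_mul _ hBdet, mul_one]
  exact (charpoly_transpose _).trans (charpoly_map y (starRingEnd K))

theorem exists_pow_eq_det_of_commute [PerfectField K] [Algebra K L] [Algebra.IsIntegral K L]
    [IsAlgClosed L] {φ : L →+* L} (hφ : ∀ a, φ (algebraMap K L a) = algebraMap K L (star a))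
    {B x y : Matrix n n K} (hB : IsUnit B) (hy : y * B * yᴴ = B) (hxy : Commute x y) {r : ℕ}
    (hr : r ≠ 0)
    (hdvd : ∀ f : K[X], f.Monic → Irreducible f →
      ∀ j, HasNilpotentBlock (toLin' (aeval x f)) j → r ∣ j + 1) :
    ∃ δ : L, δ ^ r = algebraMap K L y.det ∧ φ δ * δ = 1 := by
  have hyu := isUnit_of_mul_mul_conjTranspose_eq hB hy
  have hcomm : Commute (toLin' (x.map (algebraMap K L))) (toLin' (y.map (algebraMap K L))) :=
    (hxy.map (algebraMap K L).mapMatrix).map (toLinAlgEquiv' (R := L) (n := n))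
  have hinv : (y.map (algebraMap K L))⁻¹ = y⁻¹.map (algebraMap K L) := by
    refine inv_eq_right_inv ?_
    rw [← Matrix.map_mul, mul_nonsing_inv _ ((isUnit_iff_isUnit_det y).mp hyu),
      Matrix.map_one _ (map_zero _) (map_one _)]
  have hcharpoly : (y.map (algebraMap K L))⁻¹.charpoly =
      (y.map (algebraMap K L)).charpoly.map φ := by
    rw [hinv, charpoly_map, charpoly_inv_of_mul_mul_conjTranspose_eq hB hy, charpoly_map,
      Polynomial.map_map, Polynomial.map_map]
    congr 1
    ext a
    exact (hφ a).symm
  rw [RingHom.map_det]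
  refine exists_pow_eq_det (hyu.map (algebraMap K L).mapMatrix) (IsAlgClosed.splits _) hcharpoly
    hr fun ν => ?_
  rw [← charpoly_toLin']
  refine dvd_rootMultiplicity_charpoly_of_commute (fun μ j hj => ?_) hcomm ν
  have hμ : IsIntegral K μ := Algebra.IsIntegral.isIntegral μ
  exact hdvd _ (minpoly.monic hμ) (minpoly.irreducible hμ) j (hasNilpotentBlock_aeval_minpoly hj)

end DetOfCentralizer

section CyclicSubmodule
open Module Polynomial

variable {K V : Type*} [Field K] [AddCommGroup V] [Module K V]

/-- The `K[X]`-submodule generated by `u`, where `X` acts as `T`. -/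
noncomputable def cyclicSubmodule (T : Module.End K V) (u : V) : Submodule K V :=
  LinearMap.range (LinearMap.applyₗ u ∘ₗ (aeval (R := K) T).toLinearMap)

theorem exists_mul_add_mul_pow_succ_eq_pow {f p : K[X]} (hf : Irreducible f) {j : ℕ}
    (hp : ¬ f ^ (j + 1) ∣ p) : ∃ c d, c * p + d * f ^ (j + 1) = f ^ j := by
  classical
  obtain ⟨i, hi, hgcd⟩ :=
    (dvd_prime_pow hf.prime _).mp (EuclideanDomain.gcd_dvd_right p (f ^ (j + 1)))
  have hij : i ≤ j := by
    refine Nat.lt_succ_iff.mp (hi.lt_of_ne ?_)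
    rintro rfl
    exact hp (hgcd.symm.dvd.trans (EuclideanDomain.gcd_dvd_left _ _))
  obtain ⟨c, hc⟩ := hgcd.dvd.trans (pow_dvd_pow f hij)
  refine ⟨c * EuclideanDomain.gcdA p (f ^ (j + 1)), c * EuclideanDomain.gcdB p (f ^ (j + 1)), ?_⟩
  rw [hc, EuclideanDomain.gcd_eq_gcd_ab]
  ring

theorem aeval_apply_eq_zero_iff_pow_dvd {T : Module.End K V} {u : V} {f : K[X]} (hf : Irreducible f)
    {j : ℕ} (hu : aeval T (f ^ (j + 1)) u = 0) (hu' : aeval T (f ^ j) u ≠ 0) {p : K[X]} :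
    aeval T p u = 0 ↔ f ^ (j + 1) ∣ p := by
  constructor
  · intro hp
    by_contra hdvd
    obtain ⟨c, d, hcd⟩ := exists_mul_add_mul_pow_succ_eq_pow hf hdvd
    exact hu' (by rw [← hcd]; simp only [map_add, map_mul, LinearMap.add_apply,
      Module.End.mul_apply, hp, hu, map_zero, add_zero])
  · rintro ⟨c, rfl⟩
    rw [mul_comm, map_mul, Module.End.mul_apply, hu, map_zero]

theorem exists_linearEquiv_cyclicSubmodule {T : Module.End K V} {u : V} {F : K[X]}
    (h : ∀ p : K[X], aeval T p u = 0 ↔ F ∣ p) :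
    ∃ e : AdjoinRoot F ≃ₗ[K] cyclicSubmodule T u,
      ∀ p, (e (AdjoinRoot.mk F p) : V) = aeval T p u := by
  have hker : (Ideal.span {F}).restrictScalars K =
      LinearMap.ker (LinearMap.applyₗ u ∘ₗ (aeval (R := K) T).toLinearMap) := by
    ext p
    exact Ideal.mem_span_singleton.trans (h p).symm
  exact ⟨(Submodule.Quotient.restrictScalarsEquiv K (Ideal.span {F})).symm ≪≫ₗ
    Submodule.quotEquivOfEq _ _ hker ≪≫ₗ LinearMap.quotKerEquivRange _, fun p => rfl⟩

theorem finrank_cyclicSubmodule {T : Module.End K V} {u : V} {F : K[X]}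
    (h : ∀ p : K[X], aeval T p u = 0 ↔ F ∣ p) :
    finrank K (cyclicSubmodule T u) = F.natDegree := by
  obtain ⟨e, -⟩ := exists_linearEquiv_cyclicSubmodule h
  rw [← e.finrank_eq]
  exact finrank_quotient_span_eq_natDegree

theorem aeval_dualMap (T : Module.End K V) (p : K[X]) :
    aeval (R := K) (A := Module.End K (Dual K V)) T.dualMap p = (aeval T p).dualMap := by
  have hpow (k : ℕ) : T.dualMap ^ k = (T ^ k).dualMap := by
    induction k with
    | zero => exact LinearMap.dualMap_id.symm
    | succ k ih => rw [pow_succ, ih, pow_succ']; rfl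
  ext l v
  simp [aeval_eq_sum_range, hpow]

theorem mem_dualCoannihilator_cyclicSubmodule {T : Module.End K V} {l : Dual K V} {v : V} :
    v ∈ (cyclicSubmodule T.dualMap l).dualCoannihilator ↔ ∀ p : K[X], l (aeval T p v) = 0 := by
  rw [Submodule.mem_dualCoannihilator]
  constructor
  · intro h p
    rw [← LinearMap.dualMap_apply, ← aeval_dualMap]
    exact h _ ⟨p, rfl⟩
  · rintro h _ ⟨p, rfl⟩
    rw [← h p, ← LinearMap.dualMap_apply, ← aeval_dualMap]
    rfl

theorem aeval_apply_mem_cyclicSubmodule {T : Module.End K V} {u v : V} (a : K[X])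
    (hv : v ∈ cyclicSubmodule T u) : aeval T a v ∈ cyclicSubmodule T u := by
  obtain ⟨p, rfl⟩ := hv
  exact ⟨a * p, by simp⟩

theorem det_restrict_cyclicSubmodule {T : Module.End K V} {u : V} {F : K[X]}
    (h : ∀ p : K[X], aeval T p u = 0 ↔ F ∣ p) (a : K[X]) :
    LinearMap.det ((aeval T a).restrict fun _ => aeval_apply_mem_cyclicSubmodule (u := u) a) =
      Algebra.norm K (AdjoinRoot.mk F a) := by
  obtain ⟨e, he⟩ := exists_linearEquiv_cyclicSubmodule h
  rw [Algebra.norm_apply, ← LinearMap.det_conj _ e]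
  congr 1
  refine LinearMap.ext fun v => Subtype.ext ?_
  obtain ⟨b, rfl⟩ := e.surjective v
  obtain ⟨p, rfl⟩ := AdjoinRoot.mk_surjective b
  simp only [LinearMap.coe_restrict_apply, LinearMap.comp_apply, LinearEquiv.coe_coe,
    LinearEquiv.symm_apply_apply, Algebra.coe_lmul_eq_mul, LinearMap.mul_apply', he,
    ← map_mul (AdjoinRoot.mk F), map_mul (aeval T), Module.End.mul_apply]

theorem commute_submodule_projection {T : Module.End K V} {p q : Submodule K V} (hpq : IsCompl p q)
    (hp : ∀ v ∈ p, T v ∈ p) (hq : ∀ v ∈ q, T v ∈ q) : Commute T (p.projection q hpq) := by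
  refine ((LinearMap.IsIdempotentElem.commute_iff
    (Submodule.isIdempotentElem_projection hpq)).mpr ?_).symm
  rw [Submodule.range_projection, Submodule.ker_projection]
  exact ⟨hp, hq⟩

theorem det_one_add_sub_one_mul_projection [FiniteDimensional K V] {S : Module.End K V}
    {p q : Submodule K V} (hpq : IsCompl p q) (hp : ∀ v ∈ p, S v ∈ p) :
    LinearMap.det (1 + (S - 1) * p.projection q hpq) = LinearMap.det (S.restrict hp) := by
  rw [← mul_one (LinearMap.det (S.restrict hp)), ← LinearMap.det_id (M := q),
    ← LinearMap.det_prodMap, ← LinearMap.det_conj _ (Submodule.prodEquivOfIsCompl p q hpq)]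
  congr 1
  refine LinearMap.ext fun v => ?_
  obtain ⟨⟨a, b⟩, rfl⟩ := (Submodule.prodEquivOfIsCompl p q hpq).surjective v
  simp
  abel

/-- A vector `u` and a functional `l`, both killed by `f ^ (j + 1)`, whose pairing detects
`f ^ j`. They witness that `f ^ (j + 1)` is an elementary divisor of `T`. -/
structure IsBlockPairing (T : Module.End K V) (f : K[X]) (j : ℕ) (u : V) (l : Dual K V) : Prop where
  aeval_apply : aeval T (f ^ (j + 1)) u = 0
  comp_aeval : l ∘ₗ aeval T (f ^ (j + 1)) = 0
  apply_aeval_ne : l (aeval T (f ^ j) u) ≠ 0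

theorem HasNilpotentBlock.exists_isBlockPairing {T : Module.End K V} {f : K[X]} {j : ℕ}
    (h : HasNilpotentBlock (aeval T f) j) : ∃ u l, IsBlockPairing T f j u l := by
  obtain ⟨u, hu, hu'⟩ := h
  obtain ⟨l, hlu, hl⟩ := Submodule.exists_le_ker_of_notMem hu'
  rw [← map_pow] at hu hl hlu
  exact ⟨u, l, hu, LinearMap.range_le_ker_iff.mp hl, hlu⟩

variable {T : Module.End K V} {f : K[X]} {j : ℕ} {u : V} {l : Dual K V}

namespace IsBlockPairing

theorem aeval_apply_eq_zero_iff (h : IsBlockPairing T f j u l) (hf : Irreducible f) {p : K[X]} :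
    aeval T p u = 0 ↔ f ^ (j + 1) ∣ p :=
  aeval_apply_eq_zero_iff_pow_dvd hf h.aeval_apply fun h0 => h.apply_aeval_ne (by rw [h0, map_zero])

theorem aeval_dualMap_apply_eq_zero_iff (h : IsBlockPairing T f j u l) (hf : Irreducible f)
    {p : K[X]} : aeval (R := K) T.dualMap p l = 0 ↔ f ^ (j + 1) ∣ p := by
  refine aeval_apply_eq_zero_iff_pow_dvd hf ?_ fun h0 => h.apply_aeval_ne ?_
  · rw [aeval_dualMap]
    exact h.comp_aeval
  · rw [aeval_dualMap] at h0
    exact LinearMap.congr_fun h0 u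

variable [FiniteDimensional K V]

theorem isCompl (h : IsBlockPairing T f j u l) (hf : Irreducible f) :
    IsCompl (cyclicSubmodule T u) (cyclicSubmodule T.dualMap l).dualCoannihilator := by
  have hdisj : Disjoint (cyclicSubmodule T u)
      (cyclicSubmodule T.dualMap l).dualCoannihilator := by
    rw [Submodule.disjoint_def]
    rintro _ ⟨p, rfl⟩ hp
    by_contra hpu
    obtain ⟨c, d, hcd⟩ := exists_mul_add_mul_pow_succ_eq_pow hf
      (mt (h.aeval_apply_eq_zero_iff hf).mpr hpu)
    refine h.apply_aeval_ne ?_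
    rw [← hcd, map_add, map_mul, map_mul, LinearMap.add_apply, Module.End.mul_apply,
      Module.End.mul_apply, h.aeval_apply, map_zero, add_zero]
    exact mem_dualCoannihilator_cyclicSubmodule.mp hp c
  refine ⟨hdisj, codisjoint_iff.mpr (Submodule.eq_top_of_disjoint _ _ ?_ hdisj)⟩
  rw [← Subspace.finrank_add_finrank_dualCoannihilator_eq (cyclicSubmodule T.dualMap l),
    finrank_cyclicSubmodule fun _ => h.aeval_apply_eq_zero_iff hf,
    finrank_cyclicSubmodule fun _ => h.aeval_dualMap_apply_eq_zero_iff hf]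

/-- The projection onto the cyclic submodule generated by `u`, along the common kernel of the
functionals `l ∘ p(T)`. -/
noncomputable def projection (h : IsBlockPairing T f j u l) (hf : Irreducible f) : Module.End K V :=
  (cyclicSubmodule T u).projection _ (h.isCompl hf)

theorem commute_projection (h : IsBlockPairing T f j u l) (hf : Irreducible f) :
    Commute T (h.projection hf) := by
  refine commute_submodule_projection _ (fun v hv => ?_) fun v hv => ?_
  · simpa using aeval_apply_mem_cyclicSubmodule X hv
  · rw [mem_dualCoannihilator_cyclicSubmodule] at hv ⊢
    intro p
    have hpX := hv (p * X)
    rwa [map_mul, aeval_X, Module.End.mul_apply] at hpX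

theorem exists_aeval_apply_eq_projection_apply (h : IsBlockPairing T f j u l) (hf : Irreducible f)
    (v : V) : ∃ p : K[X], aeval T p u = h.projection hf v :=
  Submodule.projection_apply_mem (h.isCompl hf) v

theorem projection_apply_eq_zero_iff (h : IsBlockPairing T f j u l) (hf : Irreducible f) {v : V} :
    h.projection hf v = 0 ↔ ∀ p : K[X], l (aeval T p v) = 0 :=
  (Submodule.projection_apply_eq_zero_iff _).trans mem_dualCoannihilator_cyclicSubmodule

theorem isIdempotentElem_projection (h : IsBlockPairing T f j u l) (hf : Irreducible f) :
    IsIdempotentElem (h.projection hf) :=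
  Submodule.isIdempotentElem_projection _

theorem det_one_add_mul_projection (h : IsBlockPairing T f j u l) (hf : Irreducible f) (a : K[X]) :
    LinearMap.det (1 + (aeval T a - 1) * h.projection hf) =
      Algebra.norm K (AdjoinRoot.mk (f ^ (j + 1)) a) :=
  (det_one_add_sub_one_mul_projection _ _).trans
    (det_restrict_cyclicSubmodule (fun _ => h.aeval_apply_eq_zero_iff hf) a)

end IsBlockPairing

end CyclicSubmodule

section NormAdjoinRoot
open Polynomial

variable {K L : Type*} [Field K] [Field L] [IsAlgClosed L]

theorem det_aeval_eq_prod_roots_charpoly {n : Type*} [Fintype n] [DecidableEq n]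
    (A : Matrix n n L) (a : L[X]) :
    (aeval A a).det = (A.charpoly.roots.map fun μ => a.eval μ).prod := by
  have hcard : A.charpoly.roots.card = Fintype.card n := by
    rw [splits_iff_card_roots.mp (IsAlgClosed.splits _), charpoly_natDegree_eq_dim]
  induction IsAlgClosed.splits a using Submonoid.closure_induction with
  | mem p hp =>
    obtain ⟨c, rfl⟩ | ⟨c, rfl⟩ := hp
    · simp [hcard, algebraMap_eq_diagonal]
    · have hc : aeval A (X + C c) = -(scalar n (-c) - A) := by
        rw [neg_sub, map_add, aeval_X, aeval_C, map_neg, sub_neg_eq_add]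
        rfl
      rw [hc, det_neg, ← eval_charpoly,
        (IsAlgClosed.splits _).eval_eq_prod_roots_of_monic A.charpoly_monic, ← hcard,
        ← Multiset.card_map (fun μ => -c - μ) A.charpoly.roots, ← Multiset.prod_map_neg,
        Multiset.map_map]
      simp [add_comm]
  | one => simp
  | mul p q _ _ hp hq => simp [hp, hq, Multiset.prod_map_mul]

variable [Algebra K L]

theorem algebraMap_norm_adjoinRoot_mk {F : K[X]} (hF : F.Monic) (a : K[X]) :
    algebraMap K L (Algebra.norm K (AdjoinRoot.mk F a)) =
      ((F.aroots L).map fun μ => aeval μ a).prod := by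
  let pb := AdjoinRoot.powerBasis hF.ne_zero
  let A := Algebra.leftMulMatrix pb.basis pb.gen
  have hA : A.charpoly = F := by
    rw [charpoly_leftMulMatrix, AdjoinRoot.minpoly_powerBasis_gen_of_monic hF]
  have hnorm : Algebra.norm K (AdjoinRoot.mk F a) = (aeval A a).det := by
    rw [aeval_algHom_apply, ← Algebra.norm_eq_matrix_det, AdjoinRoot.powerBasis_gen,
      AdjoinRoot.aeval_eq]
  have hmap : (aeval A a).map (algebraMap K L) =
      aeval (A.map (algebraMap K L)) (a.map (algebraMap K L)) := by
    rw [aeval_map_algebraMap]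
    exact (aeval_algHom_apply ((Algebra.ofId K L).mapMatrix) A a).symm
  rw [hnorm, RingHom.map_det, RingHom.mapMatrix_apply, hmap, det_aeval_eq_prod_roots_charpoly,
    charpoly_map, hA]
  simp only [eval_map_algebraMap, aroots_def]

theorem norm_adjoinRoot_mk_pow {f : K[X]} (hf : f.Monic) (m : ℕ) (a : K[X]) :
    Algebra.norm K (AdjoinRoot.mk (f ^ m) a) = Algebra.norm K (AdjoinRoot.mk f a) ^ m := by
  apply (algebraMap K (AlgebraicClosure K)).injective
  rw [map_pow, algebraMap_norm_adjoinRoot_mk (hf.pow m), algebraMap_norm_adjoinRoot_mk hf,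
    aroots_pow, Multiset.map_nsmul, Multiset.prod_nsmul]

theorem exists_norm_adjoinRoot_mk_pow_eq [Finite K] {f : K[X]} (hf : Irreducible f) (hfm : f.Monic)
    (m : ℕ) (b : K) : ∃ a, Algebra.norm K (AdjoinRoot.mk (f ^ m) a) = b ^ m := by
  have : Fact (Irreducible f) := ⟨hf⟩
  have : Module.Finite K (AdjoinRoot f) := (AdjoinRoot.powerBasis hf.ne_zero).finite
  have : Finite (AdjoinRoot f) := Module.finite_of_finite K
  obtain ⟨β, rfl⟩ := FiniteField.norm_surjective K (AdjoinRoot f) b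
  obtain ⟨a, rfl⟩ := AdjoinRoot.mk_surjective β
  exact ⟨a, norm_adjoinRoot_mk_pow hfm m a⟩

end NormAdjoinRoot

section HermitianAdjoint
open Module Polynomial

variable {K n : Type*} [Field K] [Fintype n] [DecidableEq n]

theorem exists_aeval_eq_inv {x : Matrix n n K} (hx : IsUnit x) : ∃ p : K[X], aeval x p = x⁻¹ := by
  have hc : x.charpoly.coeff 0 ≠ 0 := by
    rw [isUnit_iff_isUnit_det, det_eq_sign_charpoly_coeff] at hx
    exact right_ne_zero_of_mul hx.ne_zero
  have hCH : x * aeval x (divX x.charpoly) = -algebraMap K _ (x.charpoly.coeff 0) := by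
    rw [eq_neg_iff_add_eq_zero, ← aeval_self_charpoly x]
    conv_rhs => rw [← X_mul_divX_add x.charpoly, map_add, map_mul, aeval_X, aeval_C]
  refine ⟨divX x.charpoly * C (-(x.charpoly.coeff 0)⁻¹), (inv_eq_right_inv ?_).symm⟩
  rw [aeval_mul, aeval_C, ← mul_assoc, hCH, map_neg, neg_mul_neg, ← map_mul, mul_inv_cancel₀ hc,
    map_one]

variable [StarRing K]

/-- The adjoint of `A` for the hermitian form with Gram matrix `B⁻¹`, which is the form preserved
by the matrices `y` with `y * B * yᴴ = B`. -/
noncomputable def hermAdjoint (B A : Matrix n n K) : Matrix n n K :=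
  B * Aᴴ * B⁻¹

variable {B : Matrix n n K}

theorem mul_mul_conjTranspose_eq_iff (hB : IsUnit B) {y : Matrix n n K} :
    y * B * yᴴ = B ↔ y * hermAdjoint B y = 1 := by
  have hB' := (isUnit_iff_isUnit_det B).mp hB
  rw [hermAdjoint, ← mul_assoc, ← mul_assoc]
  constructor <;> intro h
  · rw [h, mul_nonsing_inv _ hB']
  · rw [← nonsing_inv_mul_cancel_right B (y * B * yᴴ) hB', h, one_mul]

theorem hermAdjoint_add (A C : Matrix n n K) :
    hermAdjoint B (A + C) = hermAdjoint B A + hermAdjoint B C := by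
  simp only [hermAdjoint, conjTranspose_add, mul_add, add_mul]

theorem hermAdjoint_mul (hB : IsUnit B) (A C : Matrix n n K) :
    hermAdjoint B (A * C) = hermAdjoint B C * hermAdjoint B A := by
  have hB' := (isUnit_iff_isUnit_det B).mp hB
  simp only [hermAdjoint, conjTranspose_mul, mul_assoc, nonsing_inv_mul_cancel_left B _ hB']

theorem hermAdjoint_algebraMap (hB : IsUnit B) (a : K) :
    hermAdjoint B (algebraMap K _ a) = algebraMap K _ (star a) := by
  have hB' := (isUnit_iff_isUnit_det B).mp hB
  simp [hermAdjoint, Algebra.algebraMap_eq_smul_one, mul_nonsing_inv _ hB']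

theorem hermAdjoint_one (hB : IsUnit B) : hermAdjoint B 1 = 1 := by
  simpa using hermAdjoint_algebraMap hB 1

theorem hermAdjoint_pow (hB : IsUnit B) (A : Matrix n n K) (m : ℕ) :
    hermAdjoint B (A ^ m) = hermAdjoint B A ^ m := by
  induction m with
  | zero => rw [pow_zero, pow_zero, hermAdjoint_one hB]
  | succ m ih => rw [pow_succ, pow_succ', hermAdjoint_mul hB, ih]

theorem hermAdjoint_inv (hB : IsUnit B) (A : Matrix n n K) :
    hermAdjoint B A⁻¹ = (hermAdjoint B A)⁻¹ := by
  have hB' := (isUnit_iff_isUnit_det B).mp hB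
  simp only [hermAdjoint, Matrix.mul_inv_rev, nonsing_inv_nonsing_inv B hB',
    conjTranspose_nonsing_inv, mul_assoc]

theorem hermAdjoint_hermAdjoint (hB : IsUnit B) (hBherm : B.IsHermitian) (A : Matrix n n K) :
    hermAdjoint B (hermAdjoint B A) = A := by
  have hB' := (isUnit_iff_isUnit_det B).mp hB
  simp only [hermAdjoint, conjTranspose_mul, conjTranspose_conjTranspose,
    conjTranspose_nonsing_inv, hBherm.eq, mul_assoc, mul_nonsing_inv_cancel_left B _ hB',
    mul_nonsing_inv B hB', mul_one]

theorem det_hermAdjoint (hB : IsUnit B) (A : Matrix n n K) :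
    (hermAdjoint B A).det = star A.det := by
  have hB' := (isUnit_iff_isUnit_det B).mp hB
  rw [hermAdjoint, det_mul_right_comm, det_mul, mul_nonsing_inv B hB', det_one, one_mul,
    det_conjTranspose]

theorem commute_hermAdjoint (hB : IsUnit B) {A C : Matrix n n K} (h : Commute A C) :
    Commute (hermAdjoint B A) (hermAdjoint B C) := by
  rw [Commute, SemiconjBy, ← hermAdjoint_mul hB, ← hermAdjoint_mul hB, h.eq]

theorem hermAdjoint_aeval (hB : IsUnit B) (A : Matrix n n K) (p : K[X]) :
    hermAdjoint B (aeval A p) = aeval (hermAdjoint B A) (p.map (starRingEnd K)) := by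
  induction p using Polynomial.induction_on with
  | C a =>
    rw [aeval_C, hermAdjoint_algebraMap hB, Polynomial.map_C, aeval_C, starRingEnd_apply]
  | add p q hp hq => simp only [map_add, hermAdjoint_add, Polynomial.map_add, hp, hq]
  | monomial k a h =>
    have hXk : (C a * X ^ (k + 1) : K[X]) = X * (C a * X ^ k) := by ring
    rw [pow_succ, ← mul_assoc, aeval_mul, aeval_X, hermAdjoint_mul hB, h, mul_assoc, ← pow_succ,
      hXk, Polynomial.map_mul (p := X), map_X, aeval_mul, aeval_X]

theorem exists_aeval_eq_hermAdjoint_aeval (hB : IsUnit B) {x : Matrix n n K}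
    (hx : x * B * xᴴ = B) (p : K[X]) : ∃ p' : K[X], aeval x p' = hermAdjoint B (aeval x p) := by
  rw [mul_mul_conjTranspose_eq_iff hB] at hx
  obtain ⟨s, hs⟩ := exists_aeval_eq_inv (IsUnit.of_mul_eq_one _ hx)
  refine ⟨(p.map (starRingEnd K)).comp s, ?_⟩
  rw [aeval_comp, hs, inv_eq_right_inv hx, hermAdjoint_aeval hB]

/-- The hermitian form with Gram matrix `B⁻¹`, conjugate-linear in the first argument. -/
noncomputable def hermForm (B : Matrix n n K) : (n → K) →ₗ⋆[K] (n → K) →ₗ[K] K :=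
  LinearMap.mk₂'ₛₗ (starRingEnd K) (RingHom.id K) (fun u v => star u ⬝ᵥ B⁻¹ *ᵥ v)
    (by simp [add_dotProduct]) (by simp [starRingEnd_apply]) (by simp [mulVec_add])
    (by simp [mulVec_smul])

theorem hermForm_apply (u v : n → K) : hermForm B u v = star u ⬝ᵥ B⁻¹ *ᵥ v :=
  rfl

theorem hermForm_mulVec_left (hB : IsUnit B) (A : Matrix n n K) (u v : n → K) :
    hermForm B (A *ᵥ u) v = hermForm B u (hermAdjoint B A *ᵥ v) := by
  have hB' := (isUnit_iff_isUnit_det B).mp hB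
  rw [hermForm_apply, hermForm_apply, hermAdjoint, star_mulVec, ← dotProduct_mulVec, mulVec_mulVec,
    mulVec_mulVec, mul_assoc, nonsing_inv_mul_cancel_left B _ hB']

theorem hermForm_mulVec_right (hB : IsUnit B) (hBherm : B.IsHermitian) (A : Matrix n n K)
    (u v : n → K) : hermForm B u (A *ᵥ v) = hermForm B (hermAdjoint B A *ᵥ u) v := by
  rw [hermForm_mulVec_left hB, hermAdjoint_hermAdjoint hB hBherm]

theorem star_hermForm (hBherm : B.IsHermitian) (u v : n → K) :
    star (hermForm B u v) = hermForm B v u := by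
  rw [hermForm_apply, hermForm_apply, ← star_dotProduct_star, star_star, star_mulVec,
    hBherm.inv.eq, dotProduct_mulVec, dotProduct_comm]

theorem eq_zero_of_forall_hermForm_eq_zero (hB : IsUnit B) {v : n → K}
    (h : ∀ u, hermForm B u v = 0) : v = 0 := by
  have hB' := (isUnit_iff_isUnit_det B).mp hB
  have hv : B⁻¹ *ᵥ v = 0 := dotProduct_eq_zero _ fun w => by
    simpa [hermForm_apply, dotProduct_comm] using h (star w)
  rw [← one_mulVec v, ← mul_nonsing_inv B hB', ← mulVec_mulVec, hv, mulVec_zero]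

theorem exists_hermForm_eq (hB : IsUnit B) (hBherm : B.IsHermitian) (l : Dual K (n → K)) :
    ∃ w, hermForm B w = l := by
  have hB' := (isUnit_iff_isUnit_det B).mp hB
  obtain ⟨v, rfl⟩ := (dotProductEquiv K n).surjective l
  refine ⟨B *ᵥ star v, LinearMap.ext fun t => ?_⟩
  rw [hermForm_apply, star_mulVec, star_star, hBherm.eq, ← dotProduct_mulVec, mulVec_mulVec,
    mul_nonsing_inv B hB', one_mulVec, dotProductEquiv_apply_apply]

theorem exists_mem_sesquilin_self_ne_zero {V : Type*} [AddCommGroup V] [Module K V] {c : K}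
    (hc : star c ≠ c) (β : V →ₗ⋆[K] V →ₗ[K] K) {W : Submodule K V} {u v : V} (hu : u ∈ W)
    (hv : v ∈ W) (h : β v u ≠ 0) : ∃ w ∈ W, β w w ≠ 0 := by
  by_contra! hW
  have huv : β u v + β v u = 0 := by
    simpa [hW u hu, hW v hv, add_comm] using hW (v + u) (W.add_mem hv hu)
  have hcuv : star c * β u v + c * β v u = 0 := by
    simpa [hW u hu, hW v hv, add_comm, starRingEnd_apply] using
      hW (v + c • u) (W.add_mem hv (W.smul_mem c hu))
  have : (c - star c) * β v u = 0 := by linear_combination hcuv - star c * huv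
  exact (mul_ne_zero (sub_ne_zero.mpr hc.symm) h) this

theorem hermForm_aeval_eq_zero_of_projection_apply_eq_zero (hB : IsUnit B) {x : Matrix n n K}
    (hx : x * B * xᴴ = B) {f : K[X]} {j : ℕ} {u w : n → K}
    (h : IsBlockPairing (toLin' x) f j u (hermForm B w)) (hf : Irreducible f) {v : n → K}
    (hv : h.projection hf v = 0) (p : K[X]) : hermForm B (aeval x p *ᵥ w) v = 0 := by
  obtain ⟨p', hp'⟩ := exists_aeval_eq_hermAdjoint_aeval hB hx p
  rw [hermForm_mulVec_left hB, ← hp', ← toLin'_apply, ← aeval_toLin']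
  exact (h.projection_apply_eq_zero_iff hf).mp hv p'

theorem hermForm_aeval_aeval_eq_zero (hB : IsUnit B) {x : Matrix n n K}
    {F G : K[X]} (hFG : IsCoprime F G) (hG : aeval x G = hermAdjoint B (aeval x F)) {u : n → K}
    (hu : aeval x F *ᵥ u = 0) (p q : K[X]) :
    hermForm B (aeval x p *ᵥ u) (aeval x q *ᵥ u) = 0 := by
  obtain ⟨a, b, hab⟩ := hFG
  have hq : aeval x q *ᵥ u = hermAdjoint B (aeval x F) *ᵥ aeval x (b * q) *ᵥ u := by
    have : aeval x q = aeval x (a * q) * aeval x F + aeval x G * aeval x (b * q) := by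
      rw [← map_mul, ← map_mul, ← map_add]
      congr 1
      linear_combination (-q) * hab
    rw [this, add_mulVec, ← mulVec_mulVec, hu, mulVec_zero, zero_add, ← mulVec_mulVec, hG]
  rw [hq, ← hermForm_mulVec_left hB, mulVec_mulVec, ← map_mul, mul_comm, map_mul, ← mulVec_mulVec,
    hu, mulVec_zero, map_zero, LinearMap.zero_apply]

theorem hermForm_comp_aeval_eq_zero_iff (hB : IsUnit B) (hBherm : B.IsHermitian)
    {x : Matrix n n K} {F : K[X]} {w : n → K} :
    hermForm B w ∘ₗ aeval (toLin' x) F = 0 ↔ hermAdjoint B (aeval x F) *ᵥ w = 0 := by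
  have key (t : n → K) : (hermForm B w ∘ₗ aeval (toLin' x) F) t =
      star (hermForm B t (hermAdjoint B (aeval x F) *ᵥ w)) := by
    rw [star_hermForm hBherm, ← hermForm_mulVec_right hB hBherm, aeval_toLin',
      LinearMap.comp_apply, toLin'_apply]
  constructor
  · intro h
    refine eq_zero_of_forall_hermForm_eq_zero hB fun t => star_eq_zero.mp ?_
    rw [← key, h, LinearMap.zero_apply]
  · intro h
    exact LinearMap.ext fun t => by rw [key, h, map_zero, star_zero, LinearMap.zero_apply]

theorem exists_isBlockPairing_hermForm_self (hB : IsUnit B) (hBherm : B.IsHermitian)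
    {x : Matrix n n K} {c : K} (hc : star c ≠ c) {f f' : K[X]}
    (hf' : aeval x f' = hermAdjoint B (aeval x f)) (hdvd : f ∣ f') {j : ℕ} {u v : n → K}
    (h : IsBlockPairing (toLin' x) f j u (hermForm B v)) :
    ∃ w, IsBlockPairing (toLin' x) f j w (hermForm B w) := by
  obtain ⟨g, hg⟩ := pow_dvd_pow_of_dvd hdvd (j + 1)
  have hadj : hermAdjoint B (aeval x (f ^ (j + 1))) = aeval x g * aeval x (f ^ (j + 1)) := by
    rw [map_pow, hermAdjoint_pow hB, ← hf', ← map_pow, hg, mul_comm, map_mul, map_pow]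
  have hadj' : aeval x (f ^ (j + 1)) =
      hermAdjoint B (aeval x g) * hermAdjoint B (aeval x (f ^ (j + 1))) := by
    rw [← hermAdjoint_mul hB, ← map_mul, mul_comm, map_mul, ← hadj,
      hermAdjoint_hermAdjoint hB hBherm]
  have hv : v ∈ LinearMap.ker (aeval (toLin' x) (f ^ (j + 1))) := by
    rw [LinearMap.mem_ker, aeval_toLin', toLin'_apply, hadj', ← mulVec_mulVec,
      (hermForm_comp_aeval_eq_zero_iff hB hBherm).mp h.comp_aeval, mulVec_zero]
  obtain ⟨w, hw, hne⟩ := exists_mem_sesquilin_self_ne_zero hc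
    ((hermForm B).compl₂ (aeval (toLin' x) (f ^ j))) (LinearMap.mem_ker.mpr h.aeval_apply) hv
    h.apply_aeval_ne
  refine ⟨w, hw, (hermForm_comp_aeval_eq_zero_iff hB hBherm).mpr ?_, hne⟩
  rw [LinearMap.mem_ker, aeval_toLin', toLin'_apply] at hw
  rw [hadj, ← mulVec_mulVec, hw, mulVec_zero]

theorem eq_of_forall_hermForm_mulVec_eq (hB : IsUnit B) {A C : Matrix n n K}
    (h : ∀ s t, hermForm B s (A *ᵥ t) = hermForm B s (C *ᵥ t)) : A = C := by
  refine ext_of_mulVec_single fun i => sub_eq_zero.mp ?_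
  refine eq_zero_of_forall_hermForm_eq_zero hB fun s => ?_
  rw [map_sub, h, sub_self]

theorem hermAdjoint_toMatrix'_projection_self (hB : IsUnit B) (hBherm : B.IsHermitian)
    {x : Matrix n n K} (hx : x * B * xᴴ = B) {f : K[X]} (hf : Irreducible f) {j : ℕ} {w : n → K}
    (h : IsBlockPairing (toLin' x) f j w (hermForm B w)) :
    hermAdjoint B (LinearMap.toMatrix' (h.projection hf)) =
      LinearMap.toMatrix' (h.projection hf) := by
  set E := LinearMap.toMatrix' (h.projection hf) with hE
  have hEE : hermAdjoint B E = hermAdjoint B E * E := by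
    refine eq_of_forall_hermForm_mulVec_eq hB fun s t => ?_
    obtain ⟨p, hp⟩ := h.exists_aeval_apply_eq_projection_apply hf s
    rw [aeval_toLin', toLin'_apply, ← LinearMap.toMatrix'_mulVec, ← hE] at hp
    rw [← mulVec_mulVec, ← hermForm_mulVec_left hB, ← hermForm_mulVec_left hB, ← sub_eq_zero,
      ← map_sub, ← hp]
    refine hermForm_aeval_eq_zero_of_projection_apply_eq_zero hB hx h hf ?_ p
    rw [map_sub, LinearMap.toMatrix'_mulVec, sub_eq_zero]
    exact (LinearMap.congr_fun (h.isIdempotentElem_projection hf) t).symm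
  calc hermAdjoint B E = hermAdjoint B E * E := hEE
    _ = hermAdjoint B (hermAdjoint B E * E) := by
      rw [hermAdjoint_mul hB, hermAdjoint_hermAdjoint hB hBherm]
    _ = E := by rw [← hEE, hermAdjoint_hermAdjoint hB hBherm]

theorem hermAdjoint_toMatrix'_projection_mul_self (hB : IsUnit B) {x : Matrix n n K} {f f' : K[X]}
    (hf : Irreducible f) (hf' : aeval x f' = hermAdjoint B (aeval x f)) (hcop : IsCoprime f f')
    {j : ℕ} {u : n → K} {l : Dual K (n → K)} (h : IsBlockPairing (toLin' x) f j u l) :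
    hermAdjoint B (LinearMap.toMatrix' (h.projection hf)) * LinearMap.toMatrix' (h.projection hf) =
      0 := by
  refine eq_of_forall_hermForm_mulVec_eq hB fun s t => ?_
  obtain ⟨p, hp⟩ := h.exists_aeval_apply_eq_projection_apply hf s
  obtain ⟨q, hq⟩ := h.exists_aeval_apply_eq_projection_apply hf t
  have hu := h.aeval_apply
  rw [aeval_toLin', toLin'_apply] at hp hq hu
  rw [← mulVec_mulVec, ← hermForm_mulVec_left hB, LinearMap.toMatrix'_mulVec,
    LinearMap.toMatrix'_mulVec, ← hp, ← hq, zero_mulVec, map_zero]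
  refine hermForm_aeval_aeval_eq_zero hB (hcop.pow (m := j + 1) (n := j + 1)) ?_ hu p q
  rw [map_pow, map_pow, hermAdjoint_pow hB, hf']

theorem toMatrix'_projection_mul_hermAdjoint (hB : IsUnit B) (hBherm : B.IsHermitian)
    {x : Matrix n n K} (hx : x * B * xᴴ = B) {f f' : K[X]}
    (hf : Irreducible f) (hf' : aeval x f' = hermAdjoint B (aeval x f)) (hcop : IsCoprime f f')
    {j : ℕ} {u v : n → K} (h : IsBlockPairing (toLin' x) f j u (hermForm B v)) :
    LinearMap.toMatrix' (h.projection hf) * hermAdjoint B (LinearMap.toMatrix' (h.projection hf)) =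
      0 := by
  set E := LinearMap.toMatrix' (h.projection hf)
  have hv : aeval x (f' ^ (j + 1)) *ᵥ v = 0 := by
    rw [map_pow, hf', ← hermAdjoint_pow hB, ← map_pow]
    exact (hermForm_comp_aeval_eq_zero_iff hB hBherm).mp h.comp_aeval
  have hadj : aeval x (f ^ (j + 1)) = hermAdjoint B (aeval x (f' ^ (j + 1))) := by
    rw [map_pow, map_pow, hermAdjoint_pow hB, hf', hermAdjoint_hermAdjoint hB hBherm]
  have hEv (p : K[X]) : E *ᵥ aeval x p *ᵥ v = 0 := by
    rw [LinearMap.toMatrix'_mulVec, h.projection_apply_eq_zero_iff hf]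
    intro q
    rw [aeval_toLin', toLin'_apply, mulVec_mulVec, ← map_mul]
    simpa using hermForm_aeval_aeval_eq_zero hB hcop.symm.pow hadj hv 1 (q * p)
  refine ext_of_mulVec_single fun i => ?_
  rw [zero_mulVec, ← mulVec_mulVec, LinearMap.toMatrix'_mulVec, h.projection_apply_eq_zero_iff hf]
  intro p
  obtain ⟨p', hp'⟩ := exists_aeval_eq_hermAdjoint_aeval hB hx p
  rw [aeval_toLin', toLin'_apply, hermForm_mulVec_right hB hBherm, ← hp', ← hermForm_mulVec_left hB,
    hEv, map_zero, LinearMap.zero_apply]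

theorem exists_isBlockPairing_commute_hermAdjoint (hB : IsUnit B) (hBherm : B.IsHermitian)
    {x : Matrix n n K} (hx : x * B * xᴴ = B) {c : K} (hc : star c ≠ c) {f : K[X]}
    (hf : Irreducible f) {j : ℕ} (hfj : HasNilpotentBlock (toLin' (aeval x f)) j) :
    ∃ u l, ∃ h : IsBlockPairing (toLin' x) f j u l,
      Commute (LinearMap.toMatrix' (h.projection hf))
        (hermAdjoint B (LinearMap.toMatrix' (h.projection hf))) := by
  obtain ⟨f', hf'⟩ := exists_aeval_eq_hermAdjoint_aeval hB hx f
  rw [← aeval_toLin'] at hfj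
  obtain ⟨u, l, h⟩ := hfj.exists_isBlockPairing
  obtain ⟨v, rfl⟩ := exists_hermForm_eq hB hBherm l
  by_cases hdvd : f ∣ f'
  · obtain ⟨w, hw⟩ := exists_isBlockPairing_hermForm_self hB hBherm hc hf' hdvd h
    refine ⟨w, _, hw, ?_⟩
    rw [hermAdjoint_toMatrix'_projection_self hB hBherm hx hf hw]
  · have hcop := hf.coprime_iff_not_dvd.mpr hdvd
    refine ⟨u, _, h, ?_⟩
    rw [Commute, SemiconjBy, hermAdjoint_toMatrix'_projection_mul_self hB hf hf' hcop h,
      toMatrix'_projection_mul_hermAdjoint hB hBherm hx hf hf' hcop h]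

theorem mul_inv_mul_hermAdjoint_eq_one (hB : IsUnit B) (hBherm : B.IsHermitian)
    {A : Matrix n n K} (hA : IsUnit A) (hcomm : Commute A (hermAdjoint B A)) :
    A * (hermAdjoint B A)⁻¹ * hermAdjoint B (A * (hermAdjoint B A)⁻¹) = 1 := by
  have hdet := (isUnit_iff_isUnit_det A).mp hA
  have hdet' : IsUnit (hermAdjoint B A).det := by
    rw [det_hermAdjoint hB]
    exact hdet.star
  rw [hermAdjoint_mul hB, hermAdjoint_inv hB, hermAdjoint_hermAdjoint hB hBherm, mul_assoc,
    ← mul_assoc _ A⁻¹, ← Matrix.mul_inv_rev, hcomm.eq, Matrix.mul_inv_rev, mul_assoc,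
    nonsing_inv_mul _ hdet', mul_one, mul_nonsing_inv _ hdet]

theorem commute_one_add_sub_one_mul {R : Type*} [Ring R] {C P E : R} (hP : Commute C P)
    (hE : Commute C E) : Commute C (1 + (P - 1) * E) :=
  (Commute.one_right C).add_right ((hP.sub_right (Commute.one_right C)).mul_right hE)

theorem commute_hermAdjoint_one_add_sub_one_mul (hB : IsUnit B) (hBherm : B.IsHermitian)
    {P E : Matrix n n K} (hPP : Commute P (hermAdjoint B P)) (hEE : Commute E (hermAdjoint B E))
    (hPE : Commute P (hermAdjoint B E)) :
    Commute (1 + (P - 1) * E) (hermAdjoint B (1 + (P - 1) * E)) := by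
  have hEP := commute_hermAdjoint hB hPE
  rw [hermAdjoint_hermAdjoint hB hBherm] at hEP
  have hP := commute_hermAdjoint hB (commute_one_add_sub_one_mul hPP.symm hEP)
  have hE := commute_hermAdjoint hB (commute_one_add_sub_one_mul hPE.symm hEE.symm)
  rw [hermAdjoint_hermAdjoint hB hBherm] at hP hE
  exact (commute_one_add_sub_one_mul hP.symm hE.symm).symm

theorem commute_aeval_hermAdjoint (hB : IsUnit B) (hBherm : B.IsHermitian) {x : Matrix n n K}
    (hx : x * B * xᴴ = B) {C : Matrix n n K} (hC : Commute x C) (p : K[X]) :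
    Commute (aeval x p) (hermAdjoint B C) := by
  obtain ⟨p', hp'⟩ := exists_aeval_eq_hermAdjoint_aeval hB hx p
  rw [← hermAdjoint_hermAdjoint hB hBherm (aeval x p), ← hp']
  exact commute_hermAdjoint hB (Algebra.commute_of_mem_adjoin_singleton_of_commute
    (aeval_mem_adjoin_singleton K x) hC.symm).symm

theorem exists_commute_det_eq_pow_div_star [Finite K] (hB : IsUnit B) (hBherm : B.IsHermitian)
    {x : Matrix n n K} (hx : x * B * xᴴ = B) {c : K} (hc : star c ≠ c) {f : K[X]}
    (hf : Irreducible f) (hfm : f.Monic) {j : ℕ} (hfj : HasNilpotentBlock (toLin' (aeval x f)) j)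
    {b : K} (hb : b ≠ 0) :
    ∃ y, y * B * yᴴ = B ∧ Commute x y ∧ y.det = b ^ (j + 1) / star (b ^ (j + 1)) := by
  obtain ⟨u, l, h, hEE⟩ := exists_isBlockPairing_commute_hermAdjoint hB hBherm hx hc hf hfj
  set E := LinearMap.toMatrix' (h.projection hf) with hE
  obtain ⟨a, ha⟩ := exists_norm_adjoinRoot_mk_pow_eq hf hfm (j + 1) b
  set A := 1 + (aeval x a - 1) * E with hA
  have hxE : Commute x E := by
    rw [Commute, SemiconjBy, ← LinearMap.toMatrix'_toLin' x, ← LinearMap.toMatrix'_mul,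
      ← LinearMap.toMatrix'_mul, h.commute_projection hf]
  have hdet : A.det = b ^ (j + 1) := by
    rw [← ha, ← h.det_one_add_mul_projection hf, ← LinearMap.det_toLin', hA, hE]
    simp [aeval_toLin', toLin'_mul, toLin'_one, Module.End.mul_eq_comp, Module.End.one_eq_id]
  have hunit : IsUnit A := (isUnit_iff_isUnit_det A).mpr (hdet ▸ (pow_ne_zero _ hb).isUnit)
  have hxa : Commute x (aeval x a) :=
    Algebra.commute_of_mem_adjoin_singleton_of_commute (aeval_mem_adjoin_singleton K x) rfl
  have hAA : Commute A (hermAdjoint B A) :=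
    commute_hermAdjoint_one_add_sub_one_mul hB hBherm
      (commute_aeval_hermAdjoint hB hBherm hx hxa a) hEE
      (commute_aeval_hermAdjoint hB hBherm hx hxE a)
  have hxA : Commute x A := commute_one_add_sub_one_mul hxa hxE
  have hxA' : Commute x (hermAdjoint B A) := by
    simpa using commute_aeval_hermAdjoint hB hBherm hx hxA X
  refine ⟨A * (hermAdjoint B A)⁻¹, (mul_mul_conjTranspose_eq_iff hB).mpr
    (mul_inv_mul_hermAdjoint_eq_one hB hBherm hunit hAA), hxA.mul_right ?_, ?_⟩
  · simpa only [Matrix.zpow_neg_one] using Matrix.Commute.zpow_right hxA' (-1)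
  · rw [det_mul, det_nonsing_inv, det_hermAdjoint hB, hdet, Ring.inverse_eq_inv', div_eq_mul_inv]

end HermitianAdjoint

section ClassSplitting
open Polynomial

theorem mul_card_eq_of_pow_mem {G : Type*} [Group G] [IsCyclic G] [Finite G] {a b r : ℕ}
    (hG : Nat.card G = a * b) {D : Subgroup G} {S : Set ℕ} (hrb : r ∣ b)
    (hr : ∀ s, s ∣ b → (∀ m ∈ S, s ∣ m) → s ∣ r) (hD : ∀ d ∈ D, d ^ (b / r) = 1)
    (hS : ∀ m ∈ S, ∀ g : G, g ^ (a * m) ∈ D) : r * Nat.card D = b := by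
  have hdvd : r * Nat.card D ∣ b := by
    have hcard : Nat.card D ∣ b / r := by
      rw [← IsCyclic.exponent_eq_card, Monoid.exponent_dvd_iff_forall_pow_eq_one]
      exact fun d => Subtype.ext (hD d d.2)
    simpa [Nat.mul_div_cancel' hrb] using Nat.mul_dvd_mul_left r hcard
  refine Nat.dvd_antisymm hdvd ?_
  obtain ⟨s, hs⟩ := (dvd_mul_left _ r).trans hdvd
  obtain ⟨ζ, hζ⟩ := IsCyclic.exists_generator (α := G)
  have hsr : s ∣ r := hr s ⟨_, by rw [hs, mul_comm]⟩ fun m hm => by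
    have hpow : ζ ^ (a * m * Nat.card D) = 1 := by
      rw [pow_mul]
      exact congrArg Subtype.val (pow_card_eq_one' (x := (⟨_, hS m hm ζ⟩ : D)))
    rw [← orderOf_dvd_iff_pow_eq_one, orderOf_eq_card_of_forall_mem_zpowers hζ, hG, hs, mul_assoc,
      mul_comm m] at hpow
    have hpos : 0 < a := Nat.pos_of_mul_pos_right (hG ▸ Nat.card_pos)
    exact Nat.dvd_of_mul_dvd_mul_left Nat.card_pos (Nat.dvd_of_mul_dvd_mul_left hpos hpow)
  rw [hs, mul_comm r]
  exact Nat.mul_dvd_mul_left _ hsr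

variable {K : Type*} [Field K]

theorem hasEDOfExponent_succ_iff {n : ℕ} {x : Matrix (Fin n) (Fin n) K} {j : ℕ} :
    HasEDOfExponent x (j + 1) ↔
      ∃ f : K[X], f.Monic ∧ Irreducible f ∧ HasNilpotentBlock (toLin' (aeval x f)) j := by
  refine exists_congr fun f => and_congr_right fun _ => and_congr_right fun _ => ?_
  rw [hasNilpotentBlock_iff_finrank_lt, ← toLin'_pow, ← toLin'_pow, ← toLin'_pow]
  rfl

theorem exists_charP_eq_pow_of_card_eq_sq [Fintype K] {q : ℕ} (hcard : Fintype.card K = q ^ 2) :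
    ∃ p k, p.Prime ∧ CharP K p ∧ q = p ^ k := by
  obtain ⟨p, hp⟩ := CharP.exists K
  obtain ⟨m, hprime, hm⟩ := FiniteField.card K p
  obtain ⟨k, -, hk⟩ := (Nat.dvd_prime_pow hprime).mp (hm ▸ hcard ▸ dvd_pow_self q two_ne_zero)
  exact ⟨p, k, hprime, hp, hk⟩

/-- The involution `a ↦ a ^ q` of the field with `q²` elements, as a star structure; with it,
`hermStar q` is the conjugate transpose. -/
abbrev frobeniusStarRing [Fintype K] {p k : ℕ} [ExpChar K p]
    (hcard : Fintype.card K = (p ^ k) ^ 2) : StarRing K where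
  star a := a ^ p ^ k
  star_involutive a := by
    change (a ^ p ^ k) ^ p ^ k = a
    rw [← pow_mul, ← sq, ← hcard, FiniteField.pow_card]
  star_mul a b := by rw [mul_pow, mul_comm]
  star_add a b := add_pow_expChar_pow a b p k

theorem exists_pow_ne_self [Fintype K] {q : ℕ} (hcard : Fintype.card K = q ^ 2) :
    ∃ c : K, c ^ q ≠ c := by
  have hq : 1 < q := by
    have := hcard ▸ Fintype.one_lt_card (α := K)
    nlinarith
  by_contra! h
  have hroots : Fintype.card K ≤ (X ^ q - X : K[X]).natDegree :=
    card_le_degree_of_subset_roots (Z := Finset.univ) fun c _ => by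
      rw [mem_roots (FiniteField.X_pow_card_sub_X_ne_zero K hq)]
      simp [h]
  rw [hcard, FiniteField.X_pow_card_sub_X_natDegree_eq K hq] at hroots
  nlinarith

/-- The group of the matrices `y` with `y * B * yᴴ = B` that commute with `x`. -/
def unitaryCentralizer [StarRing K] {n : Type*} [Fintype n] [DecidableEq n] (B x : Matrix n n K) :
    Subgroup (Matrix n n K)ˣ where
  carrier := {y | y.val * B * y.valᴴ = B ∧ x * y = y * x}
  one_mem' := by simp
  mul_mem' := by
    rintro a b ⟨ha, ha'⟩ ⟨hb, hb'⟩
    refine ⟨?_, Commute.mul_right ha' hb'⟩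
    calc (a * b).val * B * (a * b).valᴴ = a * (b * B * b.valᴴ) * a.valᴴ := by
          rw [Units.val_mul, conjTranspose_mul]
          noncomm_ring
      _ = B := by rw [hb, ha]
  inv_mem' := by
    rintro a ⟨ha, ha'⟩
    refine ⟨?_, Commute.units_inv_right ha'⟩
    calc (a⁻¹).val * B * (a⁻¹).valᴴ = (a⁻¹).val * (a * B * a.valᴴ) * (a⁻¹).valᴴ := by rw [ha]
      _ = ((a⁻¹).val * a) * B * ((a⁻¹).val * a.val)ᴴ := by
          rw [conjTranspose_mul]
          noncomm_ring
      _ = B := by rw [Units.inv_mul, one_mul, conjTranspose_one, mul_one]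

theorem card_unitaryCentralizer [StarRing K] {n : Type*} [Fintype n] [DecidableEq n]
    (B x : Matrix n n K) :
    Nat.card {y : Matrix n n K // IsUnit y ∧ y * B * yᴴ = B ∧ x * y = y * x} =
      Nat.card {y : Matrix n n K // IsUnit y ∧ y * B * yᴴ = B ∧ x * y = y * x ∧ y.det = 1} *
        Nat.card ((unitaryCentralizer B x).map (Units.map detMonoidHom)) := by
  let φ := (Units.map (detMonoidHom (n := n) (R := K))).comp (unitaryCentralizer B x).subtype
  have hdomain : Nat.card (unitaryCentralizer B x) =
      Nat.card {y : Matrix n n K // IsUnit y ∧ y * B * yᴴ = B ∧ x * y = y * x} :=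
    Nat.card_eq_of_bijective (fun y => ⟨y.1.1, y.1.isUnit, y.2.1, y.2.2⟩)
      ⟨fun a b hab => Subtype.ext (Units.ext (congrArg Subtype.val hab)),
        fun ⟨y, hy, h⟩ => ⟨⟨hy.unit, h⟩, rfl⟩⟩
  have hker : Nat.card φ.ker = Nat.card {y : Matrix n n K //
      IsUnit y ∧ y * B * yᴴ = B ∧ x * y = y * x ∧ y.det = 1} :=
    Nat.card_eq_of_bijective (fun y => ⟨y.1.1.1, y.1.1.isUnit, y.1.2.1, y.1.2.2,
        congrArg Units.val y.2⟩)
      ⟨fun a b hab => Subtype.ext (Subtype.ext (Units.ext (congrArg Subtype.val hab))),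
        fun ⟨y, hy, h, h', h''⟩ => ⟨⟨⟨hy.unit, h, h'⟩, Units.ext h''⟩, rfl⟩⟩
  have hrange : (unitaryCentralizer B x).map (Units.map detMonoidHom) = φ.range := by
    rw [MonoidHom.range_comp, Subgroup.range_subtype]
  rw [← hdomain, ← hker, hrange, ← Subgroup.index_ker, Subgroup.card_mul_index]

variable [StarRing K] {p k : ℕ} [ExpChar K p] {n : ℕ} {B x : Matrix (Fin n) (Fin n) K}

theorem det_pow_eq_one_of_commute [PerfectField K] (hstar : ∀ a : K, star a = a ^ p ^ k)
    (hB : IsUnit B) {y : Matrix (Fin n) (Fin n) K} (hy : y * B * yᴴ = B) (hxy : Commute x y) {r : ℕ}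
    (hr : r ∣ p ^ k + 1) (hdvd : ∀ m, 1 ≤ m → HasEDOfExponent x m → r ∣ m) :
    y.det ^ ((p ^ k + 1) / r) = 1 := by
  let L := AlgebraicClosure K
  have : ExpChar L p := expChar_of_injective_algebraMap (algebraMap K L).injective p
  obtain ⟨δ, hδ, hδ1⟩ := exists_pow_eq_det_of_commute (L := L) (φ := iterateFrobenius L p k)
    (fun a => by rw [iterateFrobenius_def, hstar, map_pow]) hB hy hxy
    (ne_zero_of_dvd_ne_zero (Nat.succ_ne_zero _) hr) fun f hfm hf j hfj =>
      hdvd _ (Nat.le_add_left 1 j) (hasEDOfExponent_succ_iff.mpr ⟨f, hfm, hf, hfj⟩)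
  apply (algebraMap K L).injective
  rw [map_pow, ← hδ, ← pow_mul, Nat.mul_div_cancel' hr, pow_succ, ← iterateFrobenius_def, hδ1,
    map_one]

theorem pow_mem_map_det_unitaryCentralizer [Fintype K] (hcard : Fintype.card K = (p ^ k) ^ 2)
    (hstar : ∀ a : K, star a = a ^ p ^ k) (hB : IsUnit B) (hBherm : B.IsHermitian)
    (hx : x * B * xᴴ = B) {m : ℕ} (hm : 1 ≤ m) (hxm : HasEDOfExponent x m) (b : Kˣ) :
    b ^ ((p ^ k - 1) * m) ∈ (unitaryCentralizer B x).map (Units.map detMonoidHom) := by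
  obtain ⟨c, hc⟩ := exists_pow_ne_self hcard
  rw [← hstar] at hc
  obtain ⟨j, rfl⟩ := Nat.exists_eq_add_of_le' hm
  obtain ⟨f, hfm, hf, hfj⟩ := hasEDOfExponent_succ_iff.mp hxm
  obtain ⟨y, hy, hxy, hdet⟩ :=
    exists_commute_det_eq_pow_div_star hB hBherm hx hc hf hfm hfj (b⁻¹).ne_zero
  refine ⟨(isUnit_of_mul_mul_conjTranspose_eq hB hy).unit, ⟨hy, hxy⟩, Units.ext ?_⟩
  have hb : (b : K) ^ (j + 1) ≠ 0 := pow_ne_zero _ b.ne_zero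
  have hq : p ^ k ≠ 0 := (expChar_pow_pos K p k).ne'
  calc y.det = ((b : K) ^ (j + 1)) ^ p ^ k / (b : K) ^ (j + 1) := by
        rw [hdet, hstar, Units.val_inv_eq_inv_val, inv_pow, inv_pow, inv_div_inv]
    _ = (b ^ ((p ^ k - 1) * (j + 1)) : Kˣ).val := by
        rw [Units.val_pow_eq_pow_val, mul_comm, pow_mul, div_eq_iff hb, pow_sub_one_mul hq]

end ClassSplitting

theorem special_unitary_class_splitting_general {K : Type*} [Field K] [Fintype K] {q : ℕ}
    (hcard : Fintype.card K = q ^ 2) {n : ℕ} (B : Matrix (Fin n) (Fin n) K) (hB : IsUnit B)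
    (hBherm : hermStar q B = B) (x : Matrix (Fin n) (Fin n) K) (hxB : x * B * hermStar q x = B)
    (r : ℕ) (hr1 : r ∣ (q + 1)) (hr2 : ∀ m : ℕ, 1 ≤ m → HasEDOfExponent x m → r ∣ m)
    (hr3 : ∀ s : ℕ, s ∣ (q + 1) → (∀ m : ℕ, 1 ≤ m → HasEDOfExponent x m → s ∣ m) → s ∣ r) :
    (q + 1) * Nat.card {y : Matrix (Fin n) (Fin n) K //
        IsUnit y ∧ y * B * hermStar q y = B ∧ x * y = y * x ∧ y.det = 1} =
      r * Nat.card {y : Matrix (Fin n) (Fin n) K //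
        IsUnit y ∧ y * B * hermStar q y = B ∧ x * y = y * x} := by
  obtain ⟨p, k, hp, _, rfl⟩ := exists_charP_eq_pow_of_card_eq_sq hcard
  have : ExpChar K p := .prime hp
  let _ : StarRing K := frobeniusStarRing hcard
  have hunits : Nat.card Kˣ = (p ^ k - 1) * (p ^ k + 1) := by
    rw [Nat.card_units, Nat.card_eq_fintype_card, hcard, mul_comm, ← Nat.sq_sub_sq, one_pow]
  have hindex : r * Nat.card ((unitaryCentralizer B x).map (Units.map detMonoidHom)) = p ^ k + 1 :=
    mul_card_eq_of_pow_mem hunits (S := {m | 1 ≤ m ∧ HasEDOfExponent x m}) hr1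
      (fun s hs h => hr3 s hs fun m hm hxm => h m ⟨hm, hxm⟩)
      (by
        rintro _ ⟨y, ⟨hy, hxy⟩, rfl⟩
        exact Units.ext (det_pow_eq_one_of_commute (fun _ => rfl) hB hy hxy hr1 hr2))
      fun m hm => pow_mem_map_det_unitaryCentralizer hcard (fun _ => rfl) hB hBherm hxB hm.1 hm.2
  rw [← hindex, mul_assoc, mul_comm (Nat.card _)]
  exact congrArg (r * ·) (card_unitaryCentralizer B x).symm

/-- Let `x` be a determinant-one element of the unitary group of an invertible hermitian
matrix `B` over the field with `q²` elements, and let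
`r = gcd(q+1, gcd{m ≥ 1 : x has an elementary divisor of exponent m})` (characterized below
by divisibility).  Then `(q+1)·|C_{SU}(x)| = r·|C_U(x)|`; equivalently, the unitary class
of `x` splits into exactly `r` special unitary classes. -/
theorem special_unitary_class_splitting
    {p k : ℕ} [Fact p.Prime] (hk : k ≠ 0) (q : ℕ) (hq : q = p ^ k)
    {K : Type*} [Field K] [Fintype K] (hcard : Fintype.card K = q ^ 2)
    {n : ℕ} (B : Matrix (Fin n) (Fin n) K) (hB : IsUnit B)
    (hBherm : hermStar q B = B)
    (x : Matrix (Fin n) (Fin n) K) (hx : IsUnit x)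
    (hxB : x * B * hermStar q x = B) (hdetx : x.det = 1)
    (r : ℕ)
    (hr1 : r ∣ (q + 1))
    (hr2 : ∀ m : ℕ, 1 ≤ m → HasEDOfExponent x m → r ∣ m)
    (hr3 : ∀ s : ℕ, s ∣ (q + 1) → (∀ m : ℕ, 1 ≤ m → HasEDOfExponent x m → s ∣ m) →
        s ∣ r) :
    (q + 1) * Nat.card {y : Matrix (Fin n) (Fin n) K //
        IsUnit y ∧ y * B * hermStar q y = B ∧ x * y = y * x ∧ y.det = 1} =
      r * Nat.card {y : Matrix (Fin n) (Fin n) K //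
        IsUnit y ∧ y * B * hermStar q y = B ∧ x * y = y * x} :=
  special_unitary_class_splitting_general hcard B hB hBherm x hxB r hr1 hr2 hr3
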